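/- arXiv:2410.05054 — 2 statements merged into one kernel-verified Lean document; each statement's English description precedes it below -/
import Mathlib

section
/- (Key step in the proof of Lemma 2.8) There is a universal constant C > 0 such that for every continuously differentiable, compactly supported vector field f = (f₁,f₂) : ℝ² → ℝ², one has sup_{x ∈ ℝ²} |f(x)| ≤ C ( ∫_{ℝ²} |f|² dx )^{1/4} ( sup_{x} |∂₁f₂(x) − ∂₂f₁(x)| + sup_{x} |∂₁f₁(x) + ∂₂f₂(x)| )^{1/2}. -/
/-!
Identify `ℝ²` with `ℂ` and put `F = f₁ - i f₂`. Then `∂₁F + i ∂₂F = div f - i curl f`, so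
`2 ∂̄F` is bounded by `M = sup |curl f| + sup |div f|`. In polar coordinates about `z`,
`2 ∂̄ = e^{iθ} (∂ᵣ + (i / r) ∂_θ)`, and the `∂_θ` term integrates to zero over a circle; hence the
average of `F` over the circle of radius `r` differs from `F z` by at most `M r`
(`norm_integral_circle_sub_le`).

With `a = ‖F z‖` and Young's inequality `‖F‖ ≤ ‖F‖² / (2a) + a / 2`, this gives
`π a ≤ (2a)⁻¹ ∫ ‖F (z + r e^{iθ})‖² dθ + 2π M r`. Integrating against `r dr` over `[0, R]` turns the
first term into at most `(2a)⁻¹ ∫ ‖F‖²`, and the choice `R = a / (2M)` lets the left side absorb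
the last term, leaving `a⁴ ≤ (12 / π) M² ∫ ‖F‖²` (`norm_pow_four_le`). The fourth root is the claim
with `C = 2`.
-/


open MeasureTheory Metric ENNReal

noncomputable section

/-- The plane `ℝ²` as a Euclidean space. -/
abbrev E2 := EuclideanSpace ℝ (Fin 2)

/-- The `i`-th standard basis vector of `ℝ²`. -/
def e2 (i : Fin 2) : E2 := EuclideanSpace.single i 1

/-- Partial derivative `∂ⱼ uᵢ` of a vector field on `ℝ²`. -/
def pdv (j i : Fin 2) (u : E2 → E2) (y : E2) : ℝ := fderiv ℝ u y (e2 j) i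

/-- Divergence `∂₁f₁ + ∂₂f₂` of a vector field on `ℝ²`. -/
def div2 (u : E2 → E2) (x : E2) : ℝ := ∑ i, pdv i i u x

/-- Scalar vorticity `∂₁f₂ − ∂₂f₁` of a vector field on `ℝ²`. -/
def curl2 (u : E2 → E2) (x : E2) : ℝ := pdv 0 1 u x - pdv 1 0 u x


open Complex in
lemma hasDerivAt_exp_mul_I (θ : ℝ) :
    HasDerivAt (fun t : ℝ => exp (t * I)) (I * exp (θ * I)) θ := by
  have h := ((Complex.hasDerivAt_exp (θ * I)).comp θ ((hasDerivAt_mul_const I).comp_ofReal (z := θ)))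
  simpa [mul_comm, Function.comp_def] using h

open Complex in
/-- Write `w = exp (θ I)` and let `L` be the differential of `F` at `z + ρ w`. Then
`L w = w⁻¹ (L 1 + I L I) - I (L (I w))`, and `ρ L (I w)` is the derivative in `θ` of
`F (z + ρ w)`, whose integral over the full circle vanishes. So only `L 1 + I L I = 2 ∂̄F`
contributes to the angular integral of the radial derivative. -/
lemma norm_integral_radial_deriv_le {F : ℂ → ℂ} (hF : ContDiff ℝ 1 F) {M : ℝ}
    (hM : ∀ z, ‖fderiv ℝ F z 1 + I * fderiv ℝ F z I‖ ≤ M) (z : ℂ) {ρ : ℝ} (hρ : 0 < ρ) :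
    ‖∫ θ in -Real.pi..Real.pi, fderiv ℝ F (z + ρ * exp (θ * I)) (exp (θ * I))‖
      ≤ 2 * Real.pi * M := by
  have hFc : Continuous (fderiv ℝ F) := hF.continuous_fderiv one_ne_zero
  have hd : ∀ θ : ℝ, HasDerivAt (fun t : ℝ => F (z + ρ * exp (t * I)))
      (fderiv ℝ F (z + ρ * exp (θ * I)) (ρ * (I * exp (θ * I)))) θ := fun θ =>
    ((hF.differentiable one_ne_zero _).hasFDerivAt).comp_hasDerivAt θ
      (((hasDerivAt_exp_mul_I θ).const_mul (ρ : ℂ)).const_add z)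
  have h0 : ∫ θ in -Real.pi..Real.pi,
      fderiv ℝ F (z + ρ * exp (θ * I)) (ρ * (I * exp (θ * I))) = 0 := by
    rw [intervalIntegral.integral_eq_sub_of_hasDerivAt (fun θ _ => hd θ)
      (Continuous.intervalIntegrable (by fun_prop) _ _)]
    simp [exp_neg, exp_pi_mul_I]
  have key : ∀ θ : ℝ, fderiv ℝ F (z + ρ * exp (θ * I)) (exp (θ * I))
      = exp (-(θ * I)) * (fderiv ℝ F (z + ρ * exp (θ * I)) 1
          + I * fderiv ℝ F (z + ρ * exp (θ * I)) I)
        - (I / ρ) * fderiv ℝ F (z + ρ * exp (θ * I)) (ρ * (I * exp (θ * I))) := by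
    intro θ
    generalize fderiv ℝ F (z + ρ * exp (θ * I)) = L
    have e1 : exp (θ * I) = Real.cos θ • (1 : ℂ) + Real.sin θ • I := by
      simp [exp_mul_I]
    have e2 : (ρ : ℂ) * (I * exp (θ * I))
        = ρ • (Real.cos θ • I - Real.sin θ • (1 : ℂ)) := by
      rw [e1]; simp only [real_smul]; linear_combination (ρ * Real.sin θ : ℂ) * I_mul_I
    have e3 : exp (-(θ * I)) = Real.cos θ - Real.sin θ * I := by
      rw [← neg_mul, exp_mul_I]; simp [sub_eq_add_neg]
    have hρ' : (ρ : ℂ) ≠ 0 := by exact_mod_cast hρ.ne'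
    rw [e2, e1, e3]
    simp only [map_add, map_sub, map_smul]
    simp only [real_smul]
    field_simp
    linear_combination (Real.sin θ * L I : ℂ) * I_mul_I
  have hint : ∫ θ in -Real.pi..Real.pi, fderiv ℝ F (z + ρ * exp (θ * I)) (exp (θ * I))
      = ∫ θ in -Real.pi..Real.pi, exp (-(θ * I)) * (fderiv ℝ F (z + ρ * exp (θ * I)) 1
          + I * fderiv ℝ F (z + ρ * exp (θ * I)) I) := by
    simp_rw [key]
    rw [intervalIntegral.integral_sub (Continuous.intervalIntegrable (by fun_prop) _ _)
      (Continuous.intervalIntegrable (by fun_prop) _ _), intervalIntegral.integral_const_mul, h0]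
    simp
  rw [hint]
  refine (intervalIntegral.norm_integral_le_of_norm_le_const (C := M) fun θ _ => ?_).trans
    (le_of_eq ?_)
  · rw [norm_mul, ← neg_mul, ← ofReal_neg, norm_exp_ofReal_mul_I, one_mul]
    exact hM _
  · rw [abs_of_nonneg (by linarith [Real.pi_pos])]; ring

open Complex in
/-- Circle averages of `F` move at speed at most `M` as the radius grows. -/
lemma norm_integral_circle_sub_le {F : ℂ → ℂ} (hF : ContDiff ℝ 1 F) {M : ℝ}
    (hM : ∀ z, ‖fderiv ℝ F z 1 + I * fderiv ℝ F z I‖ ≤ M) (z : ℂ) {r : ℝ} (hr : 0 ≤ r) :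
    ‖∫ θ in -Real.pi..Real.pi, (F (z + r * exp (θ * I)) - F z)‖ ≤ 2 * Real.pi * M * r := by
  have hFc : Continuous (fderiv ℝ F) := hF.continuous_fderiv one_ne_zero
  have hd : ∀ θ ρ : ℝ, HasDerivAt (fun t : ℝ => F (z + t * exp (θ * I)))
      (fderiv ℝ F (z + ρ * exp (θ * I)) (exp (θ * I))) ρ := fun θ ρ =>
    ((hF.differentiable one_ne_zero _).hasFDerivAt).comp_hasDerivAt ρ
      ((((hasDerivAt_mul_const (exp (θ * I))).comp_ofReal (z := ρ))).const_add z)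
  have h1 : ∀ θ : ℝ, F (z + r * exp (θ * I)) - F z
      = ∫ ρ in (0 : ℝ)..r, fderiv ℝ F (z + ρ * exp (θ * I)) (exp (θ * I)) := by
    intro θ
    rw [intervalIntegral.integral_eq_sub_of_hasDerivAt (fun ρ _ => hd θ ρ)
      (Continuous.intervalIntegrable (by fun_prop) _ _)]
    simp
  simp_rw [h1]
  rw [intervalIntegral_intervalIntegral_swap]
  · refine (intervalIntegral.norm_integral_le_of_norm_le_const (C := 2 * Real.pi * M)
      fun ρ hρ => ?_).trans (le_of_eq ?_)
    · rw [Set.uIoc_of_le hr] at hρ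
      exact norm_integral_radial_deriv_le hF hM z hρ.1
    · rw [sub_zero, abs_of_nonneg hr]
  · have hc : Continuous (Function.uncurry fun θ ρ : ℝ =>
        fderiv ℝ F (z + ρ * exp (θ * I)) (exp (θ * I))) := by
      unfold Function.uncurry; fun_prop
    exact (hc.continuousOn.integrableOn_compact
      (isCompact_uIcc.prod isCompact_uIcc)).mono_set
        (Set.prod_mono Set.uIoc_subset_uIcc Set.uIoc_subset_uIcc)

open Complex in
/-- The left-hand side is the integral of `g` over the disc of radius `R` about `z`, in polar
coordinates. -/
lemma integral_polar_le {g : ℂ → ℝ} (hg : Continuous g) (hg0 : ∀ w, 0 ≤ g w)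
    (hgi : Integrable g) (z : ℂ) {R : ℝ} (hR : 0 ≤ R) :
    ∫ r in (0 : ℝ)..R, r * ∫ θ in -Real.pi..Real.pi, g (z + r * exp (θ * I)) ≤ ∫ w, g w := by
  have hpi : -Real.pi ≤ Real.pi := by linarith [Real.pi_pos]
  have h1 : ∫ w, g w = ∫ w, g (z + w) := (integral_add_left_eq_self g z).symm
  have hgz : Integrable fun w => g (z + w) := hgi.comp_add_left z
  rw [h1]
  calc _ = ∫ p in Set.Ioc 0 R ×ˢ Set.Ioo (-Real.pi) Real.pi, p.1 * g (z + p.1 * exp (p.2 * I)) := by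
        rw [Measure.volume_eq_prod, setIntegral_prod, intervalIntegral.integral_of_le hR]
        · refine integral_congr_ae (.of_forall fun r => ?_)
          simp only
          rw [intervalIntegral.integral_of_le hpi, integral_Ioc_eq_integral_Ioo,
            ← integral_const_mul]
        · refine ContinuousOn.integrableOn_compact (K := Set.Icc 0 R ×ˢ Set.Icc (-Real.pi) Real.pi)
            (isCompact_Icc.prod isCompact_Icc) (by fun_prop) |>.mono_set
            (Set.prod_mono Set.Ioc_subset_Icc_self Set.Ioo_subset_Icc_self)
    _ = ∫ p in polarCoord.target, p.1 •
          (closedBall (0 : ℂ) R).indicator (fun w => g (z + w)) (Complex.polarCoord.symm p) := by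
        have hs : Set.Ioc 0 R ×ˢ Set.Ioo (-Real.pi) Real.pi
            = polarCoord.target ∩ {p : ℝ × ℝ | p.1 ≤ R} := by
          ext p; simp [polarCoord_target]; tauto
        rw [hs, ← setIntegral_indicator (measurableSet_le measurable_fst measurable_const)]
        refine setIntegral_congr_fun polarCoord.open_target.measurableSet fun p hp => ?_
        have hp0 : 0 < p.1 := hp.1
        have hn : ‖Complex.polarCoord.symm p‖ = p.1 := by
          rw [norm_polarCoord_symm, abs_of_pos hp0]
        simp only [Set.indicator, mem_closedBall_zero_iff, hn, Set.mem_ofPred_eq, smul_eq_mul]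
        split_ifs
        · rw [Complex.polarCoord_symm_apply, exp_mul_I, ofReal_cos, ofReal_sin]
        · simp
    _ = ∫ w, (closedBall (0 : ℂ) R).indicator (fun w => g (z + w)) w :=
        Complex.integral_comp_polarCoord_symm _
    _ ≤ ∫ w, g (z + w) := by
        refine integral_mono (hgz.indicator measurableSet_closedBall) hgz
          fun w => Set.indicator_le_self' (fun _ _ => hg0 _) w

open Complex in
/-- The estimate in complex form. The circle bound at radius `r` is averaged over the disc of
radius `R = ‖F z‖ / (2 M)`. -/
lemma norm_pow_four_le {F : ℂ → ℂ} (hF : ContDiff ℝ 1 F)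
    (hFi : Integrable fun w => ‖F w‖ ^ 2) {M : ℝ} (hM0 : 0 < M)
    (hM : ∀ z, ‖fderiv ℝ F z 1 + I * fderiv ℝ F z I‖ ≤ M) (z : ℂ) :
    ‖F z‖ ^ 4 ≤ 4 * M ^ 2 * ∫ w, ‖F w‖ ^ 2 := by
  have hπ := Real.pi_gt_three
  have hFc := hF.continuous
  rcases eq_or_ne (F z) 0 with h0 | h0
  · have hE : 0 ≤ ∫ w, ‖F w‖ ^ 2 := integral_nonneg fun _ => by positivity
    rw [h0, norm_zero, zero_pow four_ne_zero]; positivity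
  set a := ‖F z‖ with ha
  have ha0 : 0 < a := norm_pos_iff.mpr h0
  set E := ∫ w, ‖F w‖ ^ 2 with hE
  set h : ℝ → ℝ := fun r => ∫ θ in -Real.pi..Real.pi, ‖F (z + r * exp (θ * I))‖ ^ 2 with hh
  have hhc : Continuous h :=
    intervalIntegral.continuous_parametric_intervalIntegral_of_continuous' (by fun_prop) _ _
  have step1 : ∀ r : ℝ, 0 ≤ r → Real.pi * a ≤ h r / (2 * a) + 2 * Real.pi * M * r := by
    intro r hr
    have hc : Continuous fun θ : ℝ => F (z + r * exp (θ * I)) := by fun_prop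
    have h1 := norm_integral_circle_sub_le hF hM z hr
    rw [intervalIntegral.integral_sub (hc.intervalIntegrable _ _) (by simp),
      intervalIntegral.integral_const] at h1
    have h2 : ‖(Real.pi - -Real.pi) • F z‖ = 2 * Real.pi * a := by
      rw [norm_smul, Real.norm_of_nonneg (by linarith)]; ring
    have h3 := norm_sub_norm_le ((Real.pi - -Real.pi) • F z)
      (∫ θ in -Real.pi..Real.pi, F (z + r * exp (θ * I)))
    rw [norm_sub_rev, h2] at h3
    have h4 : ‖∫ θ in -Real.pi..Real.pi, F (z + r * exp (θ * I))‖
        ≤ ∫ θ in -Real.pi..Real.pi, (‖F (z + r * exp (θ * I))‖ ^ 2 * (1 / (2 * a)) + a / 2) := by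
      refine intervalIntegral.norm_integral_le_of_norm_le (by linarith)
        (.of_forall fun θ _ => ?_) (Continuous.intervalIntegrable (by fun_prop) _ _)
      -- Young's inequality with weight `a`, so that the constant term is half of the left side.
      rw [← sub_nonneg]
      have e : ‖F (z + r * exp (θ * I))‖ ^ 2 * (1 / (2 * a)) + a / 2 - ‖F (z + r * exp (θ * I))‖
          = (‖F (z + r * exp (θ * I))‖ - a) ^ 2 / (2 * a) := by field_simp; ring
      rw [e]; positivity
    rw [intervalIntegral.integral_add (Continuous.intervalIntegrable (by fun_prop) _ _) (by simp),
      intervalIntegral.integral_mul_const, intervalIntegral.integral_const, smul_eq_mul] at h4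
    have : h r / (2 * a) = h r * (1 / (2 * a)) := by ring
    rw [this]
    simp only [hh]
    linarith
  set R := a / (2 * M) with hR
  have hR0 : 0 < R := by positivity
  have step2 : ∫ r in (0 : ℝ)..R, r * h r ≤ E :=
    integral_polar_le (g := fun w => ‖F w‖ ^ 2) (by fun_prop) (fun _ => by positivity) hFi z hR0.le
  have step3 : ∫ r in (0 : ℝ)..R, (Real.pi * a) * r
      ≤ ∫ r in (0 : ℝ)..R, ((1 / (2 * a)) * (r * h r) + 2 * Real.pi * M * r ^ 2) := by
    refine intervalIntegral.integral_mono_on hR0.le (Continuous.intervalIntegrable (by fun_prop) _ _)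
      (Continuous.intervalIntegrable (by fun_prop) _ _) fun r hr => ?_
    have := mul_le_mul_of_nonneg_left (step1 r hr.1) hr.1
    calc _ = r * (Real.pi * a) := by ring
      _ ≤ _ := this
      _ = _ := by ring
  rw [intervalIntegral.integral_add (Continuous.intervalIntegrable (by fun_prop) _ _)
      (Continuous.intervalIntegrable (by fun_prop) _ _), intervalIntegral.integral_const_mul,
      intervalIntegral.integral_const_mul, intervalIntegral.integral_const_mul, integral_id,
      integral_pow] at step3
  have step4 : Real.pi * a * (R ^ 2 / 2) ≤ 1 / (2 * a) * E + 2 * Real.pi * M * (R ^ 3 / 3) := by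
    have := mul_le_mul_of_nonneg_left step2 (by positivity : 0 ≤ 1 / (2 * a))
    norm_num at step3 ⊢
    norm_num at this
    linarith
  have hMR : M * R = a / 2 := by rw [hR]; field_simp
  have step5 : Real.pi * a ^ 2 * R ^ 2 / 3 ≤ E := by
    have := mul_le_mul_of_nonneg_left step4 (by positivity : 0 ≤ 2 * a)
    have e : 2 * a * (1 / (2 * a) * E + 2 * Real.pi * M * (R ^ 3 / 3))
        = E + 4 * a * Real.pi * (M * R) * R ^ 2 / 3 := by field_simp; ring
    rw [e, hMR] at this
    linarith
  have e : Real.pi * a ^ 2 * R ^ 2 / 3 * (4 * M ^ 2) = Real.pi / 3 * a ^ 4 := by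
    rw [hR]; field_simp; norm_num
  have h7 := mul_le_mul_of_nonneg_right step5 (by positivity : 0 ≤ 4 * M ^ 2)
  rw [e] at h7
  -- This uses `π > 3`.
  have h8 : a ^ 4 ≤ Real.pi / 3 * a ^ 4 := by
    have : 0 < a ^ 4 := by positivity
    nlinarith
  linarith

lemma bddAbove_abs {g : E2 → ℝ} (hg : Continuous g) (hs : HasCompactSupport g) :
    BddAbove (Set.range fun y => |g y|) :=
  hg.abs.bddAbove_range_of_hasCompactSupport (hs.comp_left abs_zero)

/-- Key step in the proof of Lemma 2.8: for every `C¹` compactly supported vector field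
`f` on `ℝ²`, `sup |f| ≤ C (∫ |f|²)^{1/4} ( sup|curl f| + sup|div f| )^{1/2}` with a
universal constant `C`. -/
theorem sup_le_energy_curl_div :
    ∃ C : ℝ, 0 < C ∧
      ∀ f : E2 → E2, ContDiff ℝ 1 f → HasCompactSupport f →
        ∀ x : E2, ‖f x‖ ≤
          C * (∫ y, ‖f y‖ ^ 2) ^ ((1 : ℝ) / 4) *
            ((⨆ y, |curl2 f y|) + ⨆ y, |div2 f y|) ^ ((1 : ℝ) / 2) := by
  refine ⟨2, two_pos, fun f hf hs x => ?_⟩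
  have hfc : Continuous (fderiv ℝ f) := hf.continuous_fderiv one_ne_zero
  have hpc : ∀ j i, Continuous (pdv j i f) := fun j i => by unfold pdv; fun_prop
  have hps : ∀ j i, HasCompactSupport (pdv j i f) := fun j i =>
    (hs.fderiv_apply ℝ (e2 j)).comp_left (g := fun v : E2 => v i) rfl
  have hcurl : ∀ y, |curl2 f y| ≤ ⨆ y, |curl2 f y| := fun y =>
    le_ciSup (bddAbove_abs ((hpc 0 1).sub (hpc 1 0)) ((hps 0 1).sub (hps 1 0))) y
  have hdiv : ∀ y, |div2 f y| ≤ ⨆ y, |div2 f y| := fun y => by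
    have e : div2 f = fun y => pdv 0 0 f y + pdv 1 1 f y := by
      ext y; simp [div2]
    refine le_ciSup (bddAbove_abs ?_ ?_) y
    · rw [e]; exact (hpc 0 0).add (hpc 1 1)
    · rw [e]; exact (hps 0 0).add (hps 1 1)
  set M := (⨆ y, |curl2 f y|) + ⨆ y, |div2 f y| with hMdef
  have hM0 : 0 ≤ M := add_nonneg ((abs_nonneg _).trans (hcurl 0)) ((abs_nonneg _).trans (hdiv 0))
  set E := ∫ y, ‖f y‖ ^ 2 with hE
  have hE0 : 0 ≤ E := integral_nonneg fun _ => by positivity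
  let e := Complex.orthonormalBasisOneI.repr
  have hes : ∀ w : ℂ, e w = !₂[w.re, w.im] := fun w => by
    ext i; simp [e, Complex.orthonormalBasisOneI_repr_apply]
  have he1 : e 1 = e2 0 := by
    rw [hes]; ext i; fin_cases i <;> simp [e2]
  have heI : e Complex.I = e2 1 := by
    rw [hes]; ext i; fin_cases i <;> simp [e2]
  -- The identification `v ↦ v₁ - i v₂`; the conjugation makes `2 ∂̄F = div f - i curl f`.
  let conjE : E2 →L[ℝ] ℂ := Complex.conjCLE.toContinuousLinearMap ∘L
    (e.symm.toContinuousLinearEquiv : E2 →L[ℝ] ℂ)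
  have hconj : ∀ v, conjE v = v 0 - v 1 * Complex.I := fun v => by
    simp [conjE, e, sub_eq_add_neg]
  have hconjn : ∀ v, ‖conjE v‖ = ‖v‖ := fun v => by
    simp [conjE]
  let F : ℂ → ℂ := fun w => conjE (f (e w))
  have hF : ContDiff ℝ 1 F := conjE.contDiff.comp (hf.comp e.contDiff)
  have hFn : ∀ w, ‖F w‖ = ‖f (e w)‖ := fun w => hconjn _
  have hFd : ∀ w v, fderiv ℝ F w v = conjE (fderiv ℝ f (e w) (e v)) := fun w v => by
    have h1 : HasFDerivAt F (conjE ∘L (fderiv ℝ f (e w) ∘L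
        (e.toContinuousLinearEquiv : ℂ →L[ℝ] E2))) w :=
      conjE.hasFDerivAt.comp w (((hf.differentiable one_ne_zero _).hasFDerivAt).comp w
        (e.toContinuousLinearEquiv : ℂ →L[ℝ] E2).hasFDerivAt)
    rw [h1.fderiv]; rfl
  have hdbar : ∀ w, fderiv ℝ F w 1 + Complex.I * fderiv ℝ F w Complex.I
      = div2 f (e w) - curl2 f (e w) * Complex.I := fun w => by
    rw [hFd, hFd, he1, heI, hconj, hconj]
    simp only [div2, curl2, pdv, Fin.sum_univ_two]
    push_cast
    linear_combination (-(fderiv ℝ f (e w) (e2 1) 1 : ℂ)) * Complex.I_mul_I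
  have hbound : ∀ w, ‖fderiv ℝ F w 1 + Complex.I * fderiv ℝ F w Complex.I‖ ≤ M := fun w => by
    rw [hdbar]
    refine (norm_sub_le _ _).trans ?_
    simp only [norm_mul, Complex.norm_I, mul_one, Complex.norm_real, Real.norm_eq_abs]
    linarith [hcurl (e w), hdiv (e w)]
  have hmp : MeasurePreserving e := e.measurePreserving
  have hFE : ∫ w, ‖F w‖ ^ 2 = E := by
    simp_rw [hFn]
    exact hmp.integral_comp e.toMeasurableEquiv.measurableEmbedding (fun y => ‖f y‖ ^ 2)
  have hFi : Integrable fun w => ‖F w‖ ^ 2 := by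
    have h1 : Integrable fun y => ‖f y‖ ^ 2 :=
      Continuous.integrable_of_hasCompactSupport (by have := hf.continuous; fun_prop)
        (hs.comp_left (g := fun v : E2 => ‖v‖ ^ 2) (by simp))
    simp_rw [hFn]
    exact hmp.integrable_comp_of_integrable h1
  -- `M` may vanish, so the estimate is applied with every `M' > M` before letting `M' → M`.
  have h4 : ∀ M' : ℝ, M < M' → ‖f x‖ ^ 4 ≤ 4 * M' ^ 2 * E := fun M' hM' => by
    have := norm_pow_four_le hF hFi (hM0.trans_lt hM') (fun w => (hbound w).trans hM'.le) (e.symm x)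
    rwa [hFE, hFn, e.apply_symm_apply] at this
  have h5 : ‖f x‖ ^ 4 ≤ 4 * M ^ 2 * E := by
    have hc : Filter.Tendsto (fun M' : ℝ => 4 * M' ^ 2 * E) (nhdsWithin M (Set.Ioi M))
        (nhds (4 * M ^ 2 * E)) := by
      have : Continuous (fun M' : ℝ => 4 * M' ^ 2 * E) := by fun_prop
      exact this.continuousWithinAt
    exact ge_of_tendsto hc (Filter.eventually_of_mem self_mem_nhdsWithin h4)
  refine le_of_pow_le_pow_left₀ (n := 4) (by norm_num) (by positivity) (h5.trans ?_)
  have e1 : (E ^ ((1 : ℝ) / 4)) ^ 4 = E := by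
    rw [← Real.rpow_natCast, ← Real.rpow_mul hE0]; norm_num
  have e3 : (M ^ ((1 : ℝ) / 2)) ^ 4 = M ^ 2 := by
    rw [← Real.rpow_natCast, ← Real.rpow_mul hM0]; norm_num
  rw [mul_pow, mul_pow, e1, e3]
  nlinarith [mul_nonneg hE0 (sq_nonneg M)]

end
end

section
/- (Remark 2.9, optimality of Lemma 2.8) For every α ∈ [0,1) there exists a smooth divergence-free vector field u : ℝ² → ℝ² (∂₁u₁ + ∂₂u₂ = 0) such that: the vorticity ∂₁u₂ − ∂₂u₁ is bounded on ℝ²; ‖u‖_{L²_α} < ∞; ‖u‖_{L^∞_{(1+α)/2}} < ∞; and for every β with 0 ≤ β < (1+α)/2 one has ‖u‖_{L^∞_β} = ∞. -/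
/-! Place one vortex at each of the points `4 ^ k • e₀`, of radius and amplitude comparable to
`L = (4 ^ k) ^ γ / 2` with `γ = (1 + α) / 2`. A vortex is the rescaling `L • w (L⁻¹ • (x - p))` of
one fixed compactly supported divergence-free field `w`, so its derivative is a translate-dilate
of that of `w` and the vorticities are uniformly bounded. Since `γ ≤ 1` the supports lie in
disjoint annuli `|x| ∼ 4 ^ k`, hence near each point the sum coincides with a single vortex
(`exists_field_eventuallyEq`): smoothness, vanishing divergence and bounded vorticity are local.
The `k`-th vortex has size `(4 ^ k) ^ γ` at distance `4 ^ k`, which gives both the finite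
`L^∞_γ` norm and the infinite `L^∞_β` norms for `β < γ`. Its energy is
of order `L ^ 2 · L ^ 2 ≲ (4 ^ k) ^ (2 + 2 α)`, and these form a geometric
progression, so the `L²_α` norm is finite. -/

open MeasureTheory Metric ENNReal

noncomputable section

/-- Partial derivative `∂ᵢ F` of a scalar function on `ℝ²`. -/
def pd (i : Fin 2) (F : E2 → ℝ) (z : E2) : ℝ := fderiv ℝ F z (e2 i)

/-- Truncated local Morrey `L²` norm
`‖f‖_{L²_α(R)} = sup_{r ≥ R} ( r^{-(d+2α)} ∫_{B(0,r)} |f|² )^{1/2}`, valued in `ℝ≥0∞`. -/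
def morreyR {d : ℕ} {F : Type*} [NormedAddCommGroup F] (α R : ℝ)
    (f : EuclideanSpace ℝ (Fin d) → F) : ℝ≥0∞ :=
  ⨆ r : {r : ℝ // R ≤ r},
    ((∫⁻ x in ball (0 : EuclideanSpace ℝ (Fin d)) (r : ℝ), (‖f x‖₊ : ℝ≥0∞) ^ 2) /
      ENNReal.ofReal ((r : ℝ) ^ ((d : ℝ) + 2 * α))) ^ ((1 : ℝ) / 2)

/-- Truncated `L^∞_β` norm `sup_{r ≥ R} r^{-β} sup_{|x| ≤ r} |f(x)|`, valued in `ℝ≥0∞`. -/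
def morreyInfR {d : ℕ} {F : Type*} [NormedAddCommGroup F] (β R : ℝ)
    (f : EuclideanSpace ℝ (Fin d) → F) : ℝ≥0∞ :=
  ⨆ r : {r : ℝ // R ≤ r},
    (⨆ x : {x : EuclideanSpace ℝ (Fin d) // ‖x‖ ≤ (r : ℝ)}, (‖f x.1‖₊ : ℝ≥0∞)) /
      ENNReal.ofReal ((r : ℝ) ^ β)

/-! ### The model vortex -/

/-- The model vortex `g(|x|²) (-x₂, x₁)`, with `g` a smooth cutoff supported in `(-∞, 1]`. -/
def vortex (x : E2) : E2 :=
  Real.smoothTransition (1 - ((x 0) ^ 2 + (x 1) ^ 2)) • !₂[-(x 1), x 0]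

lemma normSq_E2 (x : E2) : ‖x‖ ^ 2 = (x 0) ^ 2 + (x 1) ^ 2 := by
  rw [EuclideanSpace.norm_sq_eq]; simp [Fin.sum_univ_two]

lemma norm_e2 (i : Fin 2) : ‖e2 i‖ = 1 := by simp [e2]

lemma vortex_contDiff : ContDiff ℝ (⊤ : ℕ∞) vortex := by
  have h (i : Fin 2) : ContDiff ℝ (⊤ : ℕ∞) (fun x : E2 => x i) := by fun_prop
  refine ContDiff.fun_smul (f := fun x : E2 => Real.smoothTransition
    (1 - ((x 0) ^ 2 + (x 1) ^ 2))) (g := fun x : E2 => !₂[-(x 1), x 0]) ?_ ?_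
  · exact Real.smoothTransition.contDiff.comp
      (contDiff_const.sub (((h 0).pow 2).add ((h 1).pow 2)))
  · rw [contDiff_euclidean]
    intro i
    fin_cases i
    · simpa using (h 1).neg
    · simpa using h 0

lemma vortex_eq_zero {x : E2} (hx : 1 ≤ ‖x‖) : vortex x = 0 := by
  unfold vortex
  rw [Real.smoothTransition.zero_of_nonpos, zero_smul]
  rw [← normSq_E2]; nlinarith

lemma vortex_hasCompactSupport : HasCompactSupport vortex := by
  refine HasCompactSupport.intro (isCompact_closedBall (0 : E2) 1) fun x hx => ?_
  apply vortex_eq_zero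
  simp at hx
  exact hx.le

lemma pdv_eq_of_differentiableAt {u : E2 → E2} {x : E2} (h : DifferentiableAt ℝ u x)
    (j i : Fin 2) : pdv j i u x = fderiv ℝ (fun y => u y i) x (e2 j) := by
  have h1 := ((EuclideanSpace.proj i : E2 →L[ℝ] ℝ).hasFDerivAt.comp x h.hasFDerivAt)
  have h2 : HasFDerivAt (fun y => u y i)
    ((EuclideanSpace.proj i : E2 →L[ℝ] ℝ).comp (fderiv ℝ u x)) x := h1
  rw [h2.fderiv]
  rfl

/-- The contributions of the cutoff cancel because `(-x₂, x₁)` is orthogonal to the gradient of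
a radial function. -/
lemma vortex_div (x : E2) : div2 vortex x = 0 := by
  have hd : DifferentiableAt ℝ vortex x :=
    (vortex_contDiff.differentiable (by simp)).differentiableAt
  have hp (i : Fin 2) : HasFDerivAt (fun y : E2 => y i) (EuclideanSpace.proj i : E2 →L[ℝ] ℝ) x :=
    (EuclideanSpace.proj i : E2 →L[ℝ] ℝ).hasFDerivAt
  have hg : DifferentiableAt ℝ Real.smoothTransition (1 - ((x 0) ^ 2 + (x 1) ^ 2)) :=
    ((Real.smoothTransition.contDiff (n := 1)).differentiable (by simp)).differentiableAt
  have hG := hg.hasDerivAt.comp_hasFDerivAt x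
    ((((hp 0).pow 2).add ((hp 1).pow 2)).const_sub 1)
  have h0 := hG.mul (hp 1).neg
  have h1 := hG.mul (hp 0)
  unfold div2
  rw [Fin.sum_univ_two, pdv_eq_of_differentiableAt hd, pdv_eq_of_differentiableAt hd]
  have e0 : (fun y => vortex y 0) = fun y : E2 =>
    (Real.smoothTransition ∘ fun y : E2 => 1 - ((y 0) ^ 2 + (y 1) ^ 2)) y * -(y 1) := by
    ext y; simp [vortex]
  have e1 : (fun y => vortex y 1) = fun y : E2 =>
    (Real.smoothTransition ∘ fun y : E2 => 1 - ((y 0) ^ 2 + (y 1) ^ 2)) y * (y 0) := by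
    ext y; simp [vortex]
  rw [e0, e1]
  erw [h0.fderiv, h1.fderiv]
  simp [e2]
  ring

lemma exists_vortex_bound : ∃ C : ℝ, (∀ x, ‖vortex x‖ ≤ C) ∧
    ∀ x, ‖fderiv ℝ vortex x‖ ≤ C := by
  obtain ⟨C, hC⟩ := vortex_contDiff.continuous.bounded_above_of_compact_support
    vortex_hasCompactSupport
  obtain ⟨D, hD⟩ := (vortex_contDiff.continuous_fderiv (by simp)).bounded_above_of_compact_support
    (vortex_hasCompactSupport.fderiv (𝕜 := ℝ))
  exact ⟨max C D, fun x => (hC x).trans (by simp),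
    fun x => (hD x).trans (by simp)⟩

lemma vortex_ne_zero : vortex ((1 / 2 : ℝ) • e2 0) ≠ 0 := by
  intro h
  have h1 := congrArg (fun v : E2 => v 1) h
  simp [vortex, e2] at h1
  norm_num at h1

/-! ### Rescaled vortices -/

/-- The vortex rescaled to radius and amplitude `L`, centred at `R • e₀`. -/
def bubble (L R : ℝ) (x : E2) : E2 := L • vortex (L⁻¹ • (x - R • e2 0))

lemma bubble_contDiff (L R : ℝ) : ContDiff ℝ (⊤ : ℕ∞) (bubble L R) := by
  unfold bubble
  have := vortex_contDiff
  fun_prop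

lemma bubble_fderiv {L : ℝ} (hL : 0 < L) (R : ℝ) (x : E2) :
    fderiv ℝ (bubble L R) x = fderiv ℝ vortex (L⁻¹ • (x - R • e2 0)) := by
  have hd : DifferentiableAt ℝ vortex (L⁻¹ • (x - R • e2 0)) :=
    (vortex_contDiff.differentiable (by simp)).differentiableAt
  have hi : HasFDerivAt (fun x : E2 => L⁻¹ • (x - R • e2 0))
      (L⁻¹ • ContinuousLinearMap.id ℝ E2) x :=
    ((hasFDerivAt_id x).sub_const (R • e2 0)).fun_const_smul L⁻¹
  have h := (hd.hasFDerivAt.comp x hi).const_smul L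
  have h' : fderiv ℝ (bubble L R) x = _ := h.fderiv
  rw [h']
  ext v : 1
  simp [smul_smul, hL.ne']

lemma bubble_eq_zero {L : ℝ} (hL : 0 < L) {R : ℝ} {x : E2} (hx : L ≤ ‖x - R • e2 0‖) :
    bubble L R x = 0 := by
  unfold bubble
  rw [vortex_eq_zero, smul_zero]
  rw [norm_smul, norm_inv, Real.norm_of_nonneg hL.le, le_inv_mul_iff₀ hL]
  simpa using hx

lemma bubble_support {L R : ℝ} (hL : 0 < L) (hLR : L ≤ R / 2) {x : E2}
    (hx : ‖x‖ ≤ R / 2 ∨ 3 / 2 * R ≤ ‖x‖) : bubble L R x = 0 := by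
  apply bubble_eq_zero hL
  have hR : ‖R • e2 0‖ = R := by
    rw [norm_smul, norm_e2, mul_one, Real.norm_of_nonneg (by linarith)]
  rcases hx with hx | hx
  · have := norm_sub_norm_le (R • e2 0) x
    rw [norm_sub_rev] at this
    linarith
  · have := norm_sub_norm_le x (R • e2 0)
    linarith

lemma bubble_norm_le {L C : ℝ} (hL : 0 < L) (hC : ∀ x, ‖vortex x‖ ≤ C) (R : ℝ) (x : E2) :
    ‖bubble L R x‖ ≤ C * L := by
  unfold bubble
  rw [norm_smul, Real.norm_of_nonneg hL.le, mul_comm]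
  gcongr
  exact hC _

lemma bubble_lintegral_le {L C : ℝ} (hL : 0 < L) (hC : ∀ x, ‖vortex x‖ ≤ C) (R : ℝ) :
    ∫⁻ x, (‖bubble L R x‖₊ : ℝ≥0∞) ^ 2 ≤
      ENNReal.ofReal (C ^ 2) * volume (ball (0 : E2) 1) * ENNReal.ofReal (L ^ 4) := by
  have hC0 : 0 ≤ C := (norm_nonneg _).trans (hC 0)
  calc ∫⁻ x, (‖bubble L R x‖₊ : ℝ≥0∞) ^ 2
      ≤ ∫⁻ x, (ball (R • e2 0) L).indicator (fun _ => ENNReal.ofReal ((C * L) ^ 2)) x := by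
        apply lintegral_mono
        intro x
        by_cases hx : x ∈ ball (R • e2 0) L
        · simp only [Set.indicator_of_mem hx]
          rw [ENNReal.ofReal_pow (by positivity)]
          gcongr
          rw [← enorm_eq_nnnorm, ← ofReal_norm]
          exact ENNReal.ofReal_le_ofReal (bubble_norm_le hL hC R x)
        · rw [mem_ball, dist_eq_norm, not_lt] at hx
          simp [bubble_eq_zero hL hx]
    _ = ENNReal.ofReal ((C * L) ^ 2) * volume (ball (R • e2 0) L) := by
        rw [lintegral_indicator measurableSet_ball, setLIntegral_const]
    _ = _ := by
        rw [Measure.addHaar_ball _ _ hL.le]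
        have : Module.finrank ℝ E2 = 2 := by simp
        rw [this, show (C * L) ^ 2 = C ^ 2 * L ^ 2 by ring, show L ^ 4 = L ^ 2 * L ^ 2 by ring,
          ENNReal.ofReal_mul (by positivity), ENNReal.ofReal_mul (by positivity)]
        ring

/-! ### The superposition and its local structure -/

/-- Radius and amplitude of the `k`-th vortex. -/
def rad (γ : ℝ) (k : ℕ) : ℝ := ((4 : ℝ) ^ k) ^ γ / 2

lemma rad_pos (γ : ℝ) (k : ℕ) : 0 < rad γ k := by unfold rad; positivity

lemma rad_le {γ : ℝ} (hγ : γ ≤ 1) (k : ℕ) : rad γ k ≤ (4 : ℝ) ^ k / 2 := by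
  unfold rad
  have : ((4 : ℝ) ^ k) ^ γ ≤ ((4 : ℝ) ^ k) ^ (1 : ℝ) :=
    Real.rpow_le_rpow_of_exponent_le (one_le_pow₀ (by norm_num)) hγ
  rw [Real.rpow_one] at this
  linarith

/-- The superposition of all vortices. -/
def field (γ : ℝ) (x : E2) : E2 := ∑' k : ℕ, bubble (rad γ k) (4 ^ k) x

/-- The region `|x| < 2 · 4 ^ k`, `|x| > (3 / 8) · 4 ^ k` (no lower bound for `k = 0`) meets the
support of no vortex but the `k`-th. -/
lemma field_eq {γ : ℝ} (hγ : γ ≤ 1) {k : ℕ} {x : E2} (h1 : ‖x‖ < 2 * 4 ^ k)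
    (h2 : k = 0 ∨ 3 / 8 * 4 ^ k < ‖x‖) : field γ x = bubble (rad γ k) (4 ^ k) x := by
  unfold field
  apply tsum_eq_single
  intro j hj
  apply bubble_support (rad_pos γ j) (rad_le hγ j)
  rcases lt_or_gt_of_ne hj with h | h
  · right
    rcases h2 with h2 | h2
    · omega
    · have : (4 : ℝ) ^ (j + 1) ≤ 4 ^ k := pow_le_pow_right₀ (by norm_num) h
      rw [pow_succ] at this
      linarith
  · left
    have : (4 : ℝ) ^ (k + 1) ≤ 4 ^ j := pow_le_pow_right₀ (by norm_num) h
    rw [pow_succ] at this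
    linarith

/-- A scale adapted to `t`: the first `k` with `t < 2 · 4 ^ k`. -/
lemma exists_scale (t : ℝ) : ∃ k : ℕ, t < 2 * 4 ^ k ∧ (k = 0 ∨ 1 / 2 * 4 ^ k ≤ t) := by
  classical
  have hex : ∃ k : ℕ, t < 2 * (4 : ℝ) ^ k := by
    obtain ⟨k, hk⟩ := pow_unbounded_of_one_lt t (show (1 : ℝ) < 4 by norm_num)
    exact ⟨k, by have : (0 : ℝ) < 4 ^ k := by positivity
                 linarith⟩
  refine ⟨Nat.find hex, Nat.find_spec hex, ?_⟩
  rcases Nat.eq_zero_or_pos (Nat.find hex) with h | h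
  · exact Or.inl h
  · right
    have := Nat.find_min hex (m := Nat.find hex - 1) (by omega)
    obtain ⟨m, hm⟩ : ∃ m, Nat.find hex = m + 1 := ⟨_, (Nat.succ_pred_eq_of_pos h).symm⟩
    rw [hm] at this ⊢
    simp only [Nat.add_sub_cancel, not_lt] at this
    rw [pow_succ]; linarith

lemma exists_field_eventuallyEq {γ : ℝ} (hγ : γ ≤ 1) (x : E2) :
    ∃ k : ℕ, field γ =ᶠ[nhds x] bubble (rad γ k) (4 ^ k) := by
  obtain ⟨k, hk, hk'⟩ := exists_scale ‖x‖
  refine ⟨k, ?_⟩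
  have h1 : ∀ᶠ y : E2 in nhds x, ‖y‖ < 2 * 4 ^ k :=
    continuous_norm.continuousAt.eventually_lt_const hk
  have h2 : ∀ᶠ y : E2 in nhds x, k = 0 ∨ 3 / 8 * 4 ^ k < ‖y‖ := by
    rcases hk' with hk' | hk'
    · exact Filter.Eventually.of_forall fun _ => Or.inl hk'
    · have : 3 / 8 * (4 : ℝ) ^ k < ‖x‖ := by
        have : (0 : ℝ) < 4 ^ k := by positivity
        linarith
      filter_upwards [continuous_norm.continuousAt.eventually_const_lt this] with y hy
      exact Or.inr hy
  filter_upwards [h1, h2] with y hy1 hy2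
  exact field_eq hγ hy1 hy2

lemma field_contDiff {γ : ℝ} (hγ : γ ≤ 1) : ContDiff ℝ (⊤ : ℕ∞) (field γ) := by
  rw [contDiff_iff_contDiffAt]
  intro x
  obtain ⟨k, hk⟩ := exists_field_eventuallyEq hγ x
  exact (bubble_contDiff _ _).contDiffAt.congr_of_eventuallyEq hk

lemma exists_field_fderiv {γ : ℝ} (hγ : γ ≤ 1) (x : E2) :
    ∃ y, fderiv ℝ (field γ) x = fderiv ℝ vortex y := by
  obtain ⟨k, hk⟩ := exists_field_eventuallyEq hγ x
  exact ⟨_, by rw [hk.fderiv_eq, bubble_fderiv (rad_pos γ k)]⟩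

lemma field_div {γ : ℝ} (hγ : γ ≤ 1) (x : E2) : div2 (field γ) x = 0 := by
  obtain ⟨y, hy⟩ := exists_field_fderiv hγ x
  have := vortex_div y
  unfold div2 pdv at this ⊢
  rwa [hy]

lemma field_curl_le {γ C : ℝ} (hγ : γ ≤ 1) (hC : ∀ x, ‖fderiv ℝ vortex x‖ ≤ C) (x : E2) :
    |curl2 (field γ) x| ≤ 2 * C := by
  obtain ⟨y, hy⟩ := exists_field_fderiv hγ x
  have h (i j : Fin 2) : |fderiv ℝ vortex y (e2 j) i| ≤ C := by
    calc |fderiv ℝ vortex y (e2 j) i| ≤ ‖fderiv ℝ vortex y (e2 j)‖ :=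
          PiLp.norm_apply_le (fderiv ℝ vortex y (e2 j)) i
      _ ≤ ‖fderiv ℝ vortex y‖ * ‖e2 j‖ := ContinuousLinearMap.le_opNorm _ _
      _ ≤ C := by rw [norm_e2, mul_one]; exact hC y
  unfold curl2 pdv
  rw [hy]
  calc _ ≤ _ := abs_sub _ _
    _ ≤ 2 * C := by linarith [h 1 0, h 0 1]

lemma field_norm_le {γ C : ℝ} (hγ0 : 0 ≤ γ) (hγ : γ ≤ 1) (hC : ∀ x, ‖vortex x‖ ≤ C) (x : E2) :
    ‖field γ x‖ ≤ C * ‖x‖ ^ γ := by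
  have hC0 : 0 ≤ C := (norm_nonneg _).trans (hC 0)
  obtain ⟨k, hk⟩ := exists_field_eventuallyEq hγ x
  rw [hk.eq_of_nhds]
  rcases le_or_gt ‖x‖ (4 ^ k / 2) with h | h
  · rw [bubble_support (rad_pos γ k) (rad_le hγ k) (Or.inl h), norm_zero]
    positivity
  · refine (bubble_norm_le (rad_pos γ k) hC _ _).trans ?_
    gcongr
    unfold rad
    have h1 : ((4 : ℝ) ^ k) ^ γ ≤ (2 * ‖x‖) ^ γ :=
      Real.rpow_le_rpow (by positivity) (by linarith) hγ0
    rw [Real.mul_rpow (by norm_num) (norm_nonneg _)] at h1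
    have h2 : (2 : ℝ) ^ γ ≤ 2 ^ (1 : ℝ) := Real.rpow_le_rpow_of_exponent_le (by norm_num) hγ
    rw [Real.rpow_one] at h2
    have h3 : 0 ≤ ‖x‖ ^ γ := by positivity
    nlinarith

/-! ### Norms of the superposition -/

lemma rad_pow_four_le (α : ℝ) (k : ℕ) : rad ((1 + α) / 2) k ^ 4 ≤ ((4 : ℝ) ^ k) ^ (2 + 2 * α) := by
  have : (((4 : ℝ) ^ k) ^ ((1 + α) / 2)) ^ 4 = ((4 : ℝ) ^ k) ^ (2 + 2 * α) := by
    rw [← Real.rpow_natCast, ← Real.rpow_mul (by positivity)]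
    congr 1; push_cast; ring
  unfold rad
  rw [div_pow, this]
  exact div_le_self (by positivity) (by norm_num)

/-- Energy growth along the balls of radius `2 · 4 ^ k`. Passing from `k` to `k + 1` adds a single
vortex, and the bound grows by a factor at least `16`, which absorbs the previous energy. -/
lemma field_lintegral_le {α C : ℝ} (hα0 : 0 ≤ α) (hα1 : α < 1) (hC : ∀ x, ‖vortex x‖ ≤ C)
    (k : ℕ) :
    ∫⁻ x in ball (0 : E2) (2 * 4 ^ k), (‖field ((1 + α) / 2) x‖₊ : ℝ≥0∞) ^ 2 ≤
      ENNReal.ofReal (C ^ 2) * volume (ball (0 : E2) 1) *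
        ENNReal.ofReal (2 * ((4 : ℝ) ^ k) ^ (2 + 2 * α)) := by
  have hγ : (1 + α) / 2 ≤ 1 := by linarith
  have hb (k : ℕ) (s : Set E2) (hs : MeasurableSet s) (h : ∀ x ∈ s, field ((1 + α) / 2) x =
      bubble (rad ((1 + α) / 2) k) (4 ^ k) x) :
      ∫⁻ x in s, (‖field ((1 + α) / 2) x‖₊ : ℝ≥0∞) ^ 2 ≤
      ENNReal.ofReal (C ^ 2) * volume (ball (0 : E2) 1) *
        ENNReal.ofReal (((4 : ℝ) ^ k) ^ (2 + 2 * α)) := by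
    calc _ = ∫⁻ x in s, (‖bubble (rad ((1 + α) / 2) k) (4 ^ k) x‖₊ : ℝ≥0∞) ^ 2 :=
          setLIntegral_congr_fun hs fun x hx => by simp only [h x hx]
      _ ≤ _ := setLIntegral_le_lintegral _ _
      _ ≤ _ := bubble_lintegral_le (rad_pos _ k) hC _
      _ ≤ _ := by gcongr; exact rad_pow_four_le α k
  induction k with
  | zero =>
    refine (hb 0 _ measurableSet_ball fun x hx => ?_).trans ?_
    · exact field_eq hγ (by simpa using hx) (Or.inl rfl)
    · gcongr; simp
  | succ k ih =>
    have hsub : ball (0 : E2) (2 * 4 ^ (k + 1)) ⊆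
        ball 0 (2 * 4 ^ k) ∪ (ball 0 (2 * 4 ^ (k + 1)) \ ball 0 (2 * 4 ^ k)) := by
      intro x hx
      by_cases h : x ∈ ball (0 : E2) (2 * 4 ^ k)
      · exact Or.inl h
      · exact Or.inr ⟨hx, h⟩
    have hk := hb (k + 1) (ball 0 (2 * 4 ^ (k + 1)) \ ball 0 (2 * 4 ^ k))
      (measurableSet_ball.diff measurableSet_ball) fun x hx => by
        refine field_eq hγ (by simpa using hx.1) (Or.inr ?_)
        have h2 : 2 * 4 ^ k ≤ ‖x‖ := by simpa using hx.2
        have : (0 : ℝ) < 4 ^ k := by positivity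
        rw [pow_succ]; linarith
    refine (lintegral_mono_set hsub).trans ((lintegral_union_le _ _ _).trans
      ((add_le_add ih hk).trans ?_))
    rw [← mul_add, ← ENNReal.ofReal_add (by positivity) (by positivity)]
    gcongr
    have h4 : (4 : ℝ) ≤ 4 ^ (2 + 2 * α) := by
      calc (4 : ℝ) = 4 ^ (1 : ℝ) := by simp
        _ ≤ _ := Real.rpow_le_rpow_of_exponent_le (by norm_num) (by linarith)
    have h5 : ((4 : ℝ) ^ (k + 1)) ^ (2 + 2 * α) =
        ((4 : ℝ) ^ k) ^ (2 + 2 * α) * 4 ^ (2 + 2 * α) := by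
      rw [pow_succ, Real.mul_rpow (by positivity) (by norm_num)]
    have h6 : 0 ≤ ((4 : ℝ) ^ k) ^ (2 + 2 * α) := by positivity
    rw [h5]
    nlinarith

lemma field_morrey_lt_top {α C : ℝ} (hα0 : 0 ≤ α) (hα1 : α < 1) (hC : ∀ x, ‖vortex x‖ ≤ C) :
    morreyR α 1 (field ((1 + α) / 2)) < ⊤ := by
  set A : ℝ≥0∞ := ENNReal.ofReal (C ^ 2) * volume (ball (0 : E2) 1) with hA
  have hAtop : A ≠ ⊤ := ENNReal.mul_ne_top ENNReal.ofReal_ne_top measure_ball_lt_top.ne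
  have hB : (A * ENNReal.ofReal (2 * 2 ^ (2 + 2 * α))) ^ ((1 : ℝ) / 2) < ⊤ :=
    ENNReal.rpow_lt_top_of_nonneg (by norm_num) (ENNReal.mul_ne_top hAtop ENNReal.ofReal_ne_top)
  refine lt_of_le_of_lt (iSup_le fun r => ?_) hB
  obtain ⟨r, hr⟩ := r
  have hr0 : 0 < r := by linarith
  apply ENNReal.rpow_le_rpow _ (by norm_num)
  rw [ENNReal.div_le_iff (by simp; positivity) ENNReal.ofReal_ne_top]
  obtain ⟨k, hk, hk'⟩ := exists_scale r
  have h4 : (4 : ℝ) ^ k ≤ 2 * r := by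
    rcases hk' with rfl | h
    · simp; linarith
    · linarith
  refine (lintegral_mono_set (ball_subset_ball hk.le)).trans
    ((field_lintegral_le hα0 hα1 hC k).trans ?_)
  rw [mul_assoc A, ← ENNReal.ofReal_mul (by positivity)]
  refine mul_le_mul_right (ENNReal.ofReal_le_ofReal ?_) A
  have : ((4 : ℝ) ^ k) ^ (2 + 2 * α) ≤ (2 * r) ^ (2 + 2 * α) :=
    Real.rpow_le_rpow (by positivity) h4 (by linarith)
  rw [Real.mul_rpow (by norm_num) hr0.le] at this
  push_cast
  linarith

lemma field_morreyInf_lt_top {γ C : ℝ} (hγ0 : 0 ≤ γ) (hγ : γ ≤ 1) (hC : ∀ x, ‖vortex x‖ ≤ C) :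
    morreyInfR γ 1 (field γ) < ⊤ := by
  have hC0 : 0 ≤ C := (norm_nonneg _).trans (hC 0)
  refine lt_of_le_of_lt (iSup_le fun r => ?_) (ENNReal.ofReal_lt_top (r := C))
  obtain ⟨r, hr⟩ := r
  have hr0 : 0 < r := by linarith
  rw [ENNReal.div_le_iff (by simp; positivity) ENNReal.ofReal_ne_top]
  refine iSup_le fun x => ?_
  rw [← ENNReal.ofReal_mul hC0, ← enorm_eq_nnnorm, ← ofReal_norm]
  apply ENNReal.ofReal_le_ofReal
  refine (field_norm_le hγ0 hγ hC _).trans ?_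
  gcongr
  exact x.2

/-- Half a radius away from its centre the `k`-th vortex reaches a fixed fraction of its
amplitude. -/
lemma field_apply_center {γ : ℝ} (hγ : γ ≤ 1) (k : ℕ) :
    ‖((4 : ℝ) ^ k + rad γ k / 2) • e2 0‖ ≤ 2 * 4 ^ k ∧
    ‖field γ (((4 : ℝ) ^ k + rad γ k / 2) • e2 0)‖ =
      ‖vortex ((1 / 2 : ℝ) • e2 0)‖ / 2 * ((4 : ℝ) ^ k) ^ γ := by
  have hL := rad_pos γ k
  have hL' := rad_le hγ k
  have h4 : (0 : ℝ) < 4 ^ k := by positivity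
  have hn : ‖((4 : ℝ) ^ k + rad γ k / 2) • e2 0‖ = 4 ^ k + rad γ k / 2 := by
    rw [norm_smul, norm_e2, mul_one, Real.norm_of_nonneg (by positivity)]
  refine ⟨by rw [hn]; linarith, ?_⟩
  rw [field_eq hγ (k := k) (by rw [hn]; linarith) (Or.inr (by rw [hn]; linarith))]
  unfold bubble
  rw [← sub_smul, smul_smul, norm_smul, Real.norm_of_nonneg hL.le]
  rw [show (rad γ k)⁻¹ * (4 ^ k + rad γ k / 2 - 4 ^ k) = 1 / 2 by field_simp; ring]
  unfold rad
  ring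

lemma field_morreyInf_eq_top {γ β : ℝ} (hγ : γ ≤ 1) (hβ : β < γ) :
    morreyInfR β 1 (field γ) = ⊤ := by
  set c : ℝ := ‖vortex ((1 / 2 : ℝ) • e2 0)‖ / 2 with hc
  have hc0 : 0 < c := by
    have := norm_pos_iff.mpr vortex_ne_zero
    positivity
  have key (k : ℕ) : ENNReal.ofReal (c / 2 ^ β * ((4 : ℝ) ^ (γ - β)) ^ k) ≤
      morreyInfR β 1 (field γ) := by
    obtain ⟨h1, h2⟩ := field_apply_center hγ k
    have h4 : (1 : ℝ) ≤ 4 ^ k := one_le_pow₀ (by norm_num)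
    refine le_trans ?_ (le_iSup _ (⟨2 * 4 ^ k, by linarith⟩ : {r : ℝ // 1 ≤ r}))
    have h0 : (0 : ℝ) < (2 * 4 ^ k) ^ β := by positivity
    rw [ENNReal.le_div_iff_mul_le (by simp [h0]) (Or.inl ENNReal.ofReal_ne_top)]
    refine le_trans ?_ (le_iSup _ (⟨_, h1⟩ : {x : E2 // ‖x‖ ≤ 2 * 4 ^ k}))
    rw [← enorm_eq_nnnorm, ← ofReal_norm, h2, ← ENNReal.ofReal_mul (by positivity)]
    apply ENNReal.ofReal_le_ofReal
    apply le_of_eq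
    have e1 : ((4 : ℝ) ^ (γ - β)) ^ k = ((4 : ℝ) ^ k) ^ γ / ((4 : ℝ) ^ k) ^ β := by
      rw [← Real.rpow_sub (by positivity), ← Real.rpow_natCast, ← Real.rpow_natCast,
        ← Real.rpow_mul (by norm_num), ← Real.rpow_mul (by norm_num), mul_comm]
    rw [e1, Real.mul_rpow (by norm_num) (by positivity)]
    rw [← hc]
    field_simp
  have hlim : Filter.Tendsto (fun k : ℕ => c / 2 ^ β * ((4 : ℝ) ^ (γ - β)) ^ k)
      Filter.atTop Filter.atTop :=
    (tendsto_pow_atTop_atTop_of_one_lt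
      (Real.one_lt_rpow (by norm_num) (by linarith))).const_mul_atTop (by positivity)
  exact top_le_iff.mp (le_of_tendsto' (ENNReal.tendsto_ofReal_atTop.comp hlim) key)

/-- Remark 2.9 (optimality of Lemma 2.8): for every `α ∈ [0,1)` there is a smooth
divergence-free vector field on `ℝ²` with bounded vorticity, finite `L²_α` norm and
finite `L^∞_{(1+α)/2}` norm, whose `L^∞_β` norm is infinite for every `β < (1+α)/2`. -/
theorem linfty_interpolation_optimal (α : ℝ) (hα0 : 0 ≤ α) (hα1 : α < 1) :
    ∃ u : E2 → E2, ContDiff ℝ (⊤ : ℕ∞) u ∧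
      (∀ x, div2 u x = 0) ∧
      (⨆ x, ENNReal.ofReal |curl2 u x|) < ⊤ ∧
      morreyR α 1 u < ⊤ ∧
      morreyInfR ((1 + α) / 2) 1 u < ⊤ ∧
      ∀ β : ℝ, 0 ≤ β → β < (1 + α) / 2 → morreyInfR β 1 u = ⊤ := by
  obtain ⟨C, hC, hC'⟩ := exists_vortex_bound
  have hγ : (1 + α) / 2 ≤ 1 := by linarith
  refine ⟨field ((1 + α) / 2), field_contDiff hγ, field_div hγ, ?_,
    field_morrey_lt_top hα0 hα1 hC, field_morreyInf_lt_top (by linarith) hγ hC,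
    fun β _ hβ => field_morreyInf_eq_top hγ hβ⟩
  exact lt_of_le_of_lt (iSup_le fun x => ENNReal.ofReal_le_ofReal (field_curl_le hγ hC' x))
    ENNReal.ofReal_lt_top

end
end
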